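/- Let G = (V, E) be a directed graph on a finite vertex set V with |V| = K, and let π : V → ℝ be a probability distribution on V such that π(i) ≥ ε for every i ∈ V, for some constant 0 < ε < 1/2. Then Σ_{i∈V} π(i) / (π(i) + Σ_{j : (j→i)∈E} π(j)) ≤ 4·α(G)·log(4K / (α(G)·ε)), where α(G) is the independence number of G. -/

import Mathlib

/-!
The greedy argument of Caro–Wei and Cauchy–Schwarz give a weighted Turán inequality for the
symmetrized graph: `(∑ w) ^ 2 ≤ α * ∑ i, w i * (closed neighbourhood weight of i)`. Summed against
`w`, in-neighbourhoods and out-neighbourhoods weigh the same, so some vertex `i` satisfies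
`∑ w ≤ 2 * α * (closed in-neighbourhood weight of i)`. Removing `i` takes from the sum at most
`2 * α * w i / ∑ w`, which is at most `2 * α` times the decrease of `log (∑ w)`. Once only `α`
vertices are left, each of the remaining terms is at most `1`.
-/

open Finset

/-- `s` is an independent set of the directed graph with edge relation `E`:
for all distinct `i, j ∈ s`, neither `i → j` nor `j → i` is an edge. -/
def DirIsIndepSet {V : Type*} (E : V → V → Prop) (s : Finset V) : Prop :=
  ∀ i ∈ s, ∀ j ∈ s, i ≠ j → ¬ E i j ∧ ¬ E j i

/-- The independence number of a directed graph: the maximum cardinality of an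
independent set. -/
noncomputable def dirIndepNum (V : Type*) [Fintype V] (E : V → V → Prop) : ℕ :=
  sSup {n | ∃ s : Finset V, DirIsIndepSet E s ∧ s.card = n}

section IndepNum

variable {V : Type*} {E : V → V → Prop} {s : Finset V}

lemma isIndepSet_fromRel_iff :
    (SimpleGraph.fromRel E).IsIndepSet s ↔ DirIsIndepSet E s := by
  simp only [Set.Pairwise, SimpleGraph.fromRel_adj, mem_coe, DirIsIndepSet]
  grind

lemma dirIndepNum_eq_indepNum_fromRel [Fintype V] (E : V → V → Prop) :
    dirIndepNum V E = (SimpleGraph.fromRel E).indepNum := by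
  simp only [dirIndepNum, SimpleGraph.indepNum, SimpleGraph.isNIndepSet_iff,
    isIndepSet_fromRel_iff]

lemma DirIsIndepSet.card_le_dirIndepNum [Fintype V] (hs : DirIsIndepSet E s) :
    #s ≤ dirIndepNum V E := by
  rw [dirIndepNum_eq_indepNum_fromRel]
  exact (isIndepSet_fromRel_iff.2 hs).card_le_indepNum

lemma dirIndepNum_le_card [Fintype V] (E : V → V → Prop) :
    dirIndepNum V E ≤ Fintype.card V := by
  obtain ⟨s, hs⟩ := (SimpleGraph.fromRel E).exists_isNIndepSet_indepNum
  rw [dirIndepNum_eq_indepNum_fromRel, ← hs.card_eq]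
  exact card_le_univ s

lemma dirIndepNum_pos [Fintype V] [Nonempty V] (E : V → V → Prop) : 0 < dirIndepNum V E := by
  obtain ⟨v⟩ := ‹Nonempty V›
  have hv : DirIsIndepSet E {v} := by simp [DirIsIndepSet]
  exact Nat.pos_of_ne_zero fun h ↦ by simpa [h] using hv.card_le_dirIndepNum

end IndepNum

/-- The total weight of the closed in-neighbourhood of `i` in `S`, the denominator of the summands.
The weight of `i` is counted twice if `i ∈ S` carries a loop. -/
def closedInWeight {V R : Type*} [AddCommMonoid R] (E : V → V → Prop) [DecidableRel E]
    (w : V → R) (S : Finset V) (i : V) : R :=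
  w i + ∑ j ∈ S with E j i, w j

lemma sum_mul_sum_out_eq_sum_mul_sum_in {V R : Type*} [CommSemiring R] {E : V → V → Prop}
    [DecidableRel E] {w : V → R} {S : Finset V} :
    ∑ i ∈ S, w i * ∑ j ∈ S with E i j, w j = ∑ i ∈ S, w i * ∑ j ∈ S with E j i, w j := by
  simp only [sum_filter, mul_sum]
  rw [sum_comm]
  simp only [mul_ite, mul_zero, mul_comm]

section OrderedField

variable {V R : Type*} [Field R] [LinearOrder R] [IsStrictOrderedRing R]
  {E : V → V → Prop} [DecidableRel E] {w : V → R} {S T : Finset V} {i : V}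

lemma le_closedInWeight (hw : ∀ j ∈ S, 0 ≤ w j) : w i ≤ closedInWeight E w S i :=
  le_add_of_nonneg_right (sum_nonneg fun j hj ↦ hw j (mem_of_mem_filter j hj))

lemma closedInWeight_pos (hw : ∀ j ∈ S, 0 < w j) (hi : i ∈ S) : 0 < closedInWeight E w S i :=
  (hw i hi).trans_le (le_closedInWeight fun j hj ↦ (hw j hj).le)

lemma closedInWeight_mono (hTS : T ⊆ S) (hw : ∀ j ∈ S, 0 ≤ w j) :
    closedInWeight E w T i ≤ closedInWeight E w S i :=
  add_le_add_right (sum_le_sum_of_subset_of_nonneg (filter_subset_filter _ hTS)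
    fun j hj _ ↦ hw j (mem_of_mem_filter j hj)) _

lemma sum_div_closedInWeight_le_of_subset (hTS : T ⊆ S) (hw : ∀ j ∈ S, 0 < w j) :
    ∑ i ∈ T, w i / closedInWeight E w S i ≤ ∑ i ∈ T, w i / closedInWeight E w T i :=
  sum_le_sum fun i hi ↦ div_le_div_of_nonneg_left (hw i (hTS hi)).le
    (closedInWeight_pos (fun j hj ↦ hw j (hTS hj)) hi)
    (closedInWeight_mono hTS fun j hj ↦ (hw j hj).le)

/-- The greedy choice is a vertex of least closed neighbourhood weight: the terms of its closed
neighbourhood, which is then discarded, add up to at most `1`. -/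
theorem exists_isIndepSet_sum_div_closedInWeight_le_card (G : SimpleGraph V) [DecidableRel G.Adj]
    (hw : ∀ i ∈ S, 0 < w i) :
    ∃ T ⊆ S, G.IsIndepSet T ∧ ∑ i ∈ S, w i / closedInWeight G.Adj w S i ≤ #T := by
  classical
  induction S using Finset.strongInduction with
  | H S ih =>
  rcases S.eq_empty_or_nonempty with rfl | hS
  · exact ⟨∅, by simp⟩
  obtain ⟨i, hi, hmin⟩ := exists_min_image S (closedInWeight G.Adj w S) hS
  set N := insert i {j ∈ S | G.Adj j i}
  have hNS : N ⊆ S := insert_subset hi (filter_subset _ S)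
  have hiN : i ∈ N := mem_insert_self _ _
  have hsum_N : ∑ j ∈ N, w j = closedInWeight G.Adj w S i := sum_insert (by simp)
  obtain ⟨T, hTS, hT, hcard⟩ := ih (S \ N) (sdiff_ssubset hNS ⟨i, hiN⟩)
    fun j hj ↦ hw j (sdiff_subset hj)
  have hiT : i ∉ T := fun h ↦ (mem_sdiff.1 (hTS h)).2 hiN
  have hnonadj : ∀ j ∈ T, ¬G.Adj j i := fun j hj hadj ↦
    have hjS := mem_sdiff.1 (hTS hj)
    hjS.2 (mem_insert_of_mem (mem_filter.2 ⟨hjS.1, hadj⟩))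
  have hterms_N : ∑ j ∈ N, w j / closedInWeight G.Adj w S j ≤ 1 := calc
    _ ≤ ∑ j ∈ N, w j / closedInWeight G.Adj w S i := sum_le_sum fun j hj ↦
        div_le_div_of_nonneg_left (hw j (hNS hj)).le (closedInWeight_pos hw hi) (hmin j (hNS hj))
    _ = 1 := by rw [← sum_div, hsum_N, div_self (closedInWeight_pos hw hi).ne']
  refine ⟨insert i T, insert_subset hi (hTS.trans sdiff_subset), ?_, ?_⟩
  · rw [coe_insert]
    exact hT.insert fun j hj _ ↦ ⟨fun h ↦ hnonadj j hj h.symm, hnonadj j hj⟩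
  · rw [card_insert_of_notMem hiT, ← sum_sdiff hNS, Nat.cast_add_one]
    exact add_le_add ((sum_div_closedInWeight_le_of_subset sdiff_subset hw).trans hcard) hterms_N

theorem sq_sum_le_mul_sum_mul_closedInWeight {G : SimpleGraph V} [DecidableRel G.Adj] {a : ℕ}
    (hindep : ∀ T ⊆ S, G.IsIndepSet T → #T ≤ a) (hw : ∀ i ∈ S, 0 < w i) :
    (∑ i ∈ S, w i) ^ 2 ≤ a * ∑ i ∈ S, w i * closedInWeight G.Adj w S i := by
  obtain ⟨T, hTS, hT, hcard⟩ := exists_isIndepSet_sum_div_closedInWeight_le_card G hw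
  have hpos : ∀ i ∈ S, 0 < closedInWeight G.Adj w S i := fun i hi ↦ closedInWeight_pos hw hi
  calc (∑ i ∈ S, w i) ^ 2
    _ ≤ (∑ i ∈ S, w i / closedInWeight G.Adj w S i) *
          ∑ i ∈ S, w i * closedInWeight G.Adj w S i := by
      refine sum_sq_le_sum_mul_sum_of_sq_le_mul S (fun i hi ↦ (div_pos (hw i hi) (hpos i hi)).le)
        (fun i hi ↦ (mul_pos (hw i hi) (hpos i hi)).le) fun i hi ↦ ?_
      rw [div_mul_eq_mul_div, mul_div_assoc, mul_div_cancel_right₀ _ (hpos i hi).ne', sq]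
    _ ≤ a * ∑ i ∈ S, w i * closedInWeight G.Adj w S i := by
      refine mul_le_mul_of_nonneg_right (hcard.trans (mod_cast hindep T hTS hT)) ?_
      exact sum_nonneg fun i hi ↦ (mul_pos (hw i hi) (hpos i hi)).le

lemma closedInWeight_fromRel_le [DecidableEq V] (hw : ∀ j ∈ S, 0 ≤ w j) :
    closedInWeight (SimpleGraph.fromRel E).Adj w S i ≤
      w i + (∑ j ∈ S with E j i, w j + ∑ j ∈ S with E i j, w j) := by
  refine add_le_add_right ?_ _
  calc ∑ j ∈ S with (SimpleGraph.fromRel E).Adj j i, w j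
    _ ≤ ∑ j ∈ S with E j i ∨ E i j, w j :=
      sum_le_sum_of_subset_of_nonneg (monotone_filter_right S fun _ _ h ↦ h.2)
        fun j hj _ ↦ hw j (mem_of_mem_filter j hj)
    _ ≤ ∑ j ∈ S with E j i, w j + ∑ j ∈ S with E i j, w j := by
      rw [filter_or, ← sum_union_inter]
      exact le_add_of_nonneg_right <| sum_nonneg fun j hj ↦
        hw j (mem_of_mem_filter j (mem_of_mem_inter_left hj))

lemma sum_mul_closedInWeight_fromRel_le [DecidableEq V] (hw : ∀ i ∈ S, 0 ≤ w i) :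
    ∑ i ∈ S, w i * closedInWeight (SimpleGraph.fromRel E).Adj w S i ≤
      2 * ∑ i ∈ S, w i * closedInWeight E w S i := by
  calc ∑ i ∈ S, w i * closedInWeight (SimpleGraph.fromRel E).Adj w S i
    _ ≤ ∑ i ∈ S, w i * (w i + (∑ j ∈ S with E j i, w j + ∑ j ∈ S with E i j, w j)) :=
      sum_le_sum fun i hi ↦ mul_le_mul_of_nonneg_left (closedInWeight_fromRel_le hw) (hw i hi)
    _ = ∑ i ∈ S, w i * w i + 2 * ∑ i ∈ S, w i * ∑ j ∈ S with E j i, w j := by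
      simp only [mul_add, sum_add_distrib]
      rw [sum_mul_sum_out_eq_sum_mul_sum_in, two_mul]
    _ ≤ 2 * ∑ i ∈ S, w i * closedInWeight E w S i := by
      simp only [closedInWeight, mul_add, sum_add_distrib]
      linarith [sum_nonneg fun i (_ : i ∈ S) ↦ mul_self_nonneg (w i)]

theorem exists_sum_le_mul_closedInWeight {a : ℕ} (hS : S.Nonempty)
    (hindep : ∀ T ⊆ S, DirIsIndepSet E T → #T ≤ a) (hw : ∀ i ∈ S, 0 < w i) :
    ∃ i ∈ S, ∑ j ∈ S, w j ≤ 2 * a * closedInWeight E w S i := by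
  classical
  have hsum : ∑ i ∈ S, w i * ∑ j ∈ S, w j ≤ ∑ i ∈ S, w i * (2 * a * closedInWeight E w S i) := calc
    _ = (∑ i ∈ S, w i) ^ 2 := by rw [← sum_mul, sq]
    _ ≤ a * ∑ i ∈ S, w i * closedInWeight (SimpleGraph.fromRel E).Adj w S i :=
      sq_sum_le_mul_sum_mul_closedInWeight
        (fun T hTS hT ↦ hindep T hTS (isIndepSet_fromRel_iff.1 hT)) hw
    _ ≤ a * (2 * ∑ i ∈ S, w i * closedInWeight E w S i) :=
      mul_le_mul_of_nonneg_left (sum_mul_closedInWeight_fromRel_le fun i hi ↦ (hw i hi).le)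
        a.cast_nonneg
    _ = ∑ i ∈ S, w i * (2 * a * closedInWeight E w S i) := by
      simp only [mul_sum]
      exact sum_congr rfl fun i _ ↦ by ring
  obtain ⟨i, hi, hle⟩ := exists_le_of_sum_le hS hsum
  exact ⟨i, hi, le_of_mul_le_mul_left hle (hw i hi)⟩

end OrderedField

lemma sub_div_le_log_sub_log {x y : ℝ} (hx : 0 < x) (hy : 0 < y) :
    (y - x) / y ≤ Real.log y - Real.log x := by
  rw [← Real.log_div hy.ne' hx.ne', sub_div, div_self hy.ne', ← inv_div y x]
  exact Real.one_sub_inv_le_log_of_pos (div_pos hy hx)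

lemma one_add_two_mul_log_le {c x : ℝ} (hc : 4 ≤ c) (hx : 1 ≤ x) :
    1 + 2 * Real.log x ≤ 4 * Real.log (c * x) := by
  have hlog_four : 1 ≤ Real.log 4 := by
    rw [Real.le_log_iff_exp_le four_pos]
    linarith [Real.exp_one_lt_three]
  rw [Real.log_mul (by positivity) (by positivity)]
  linarith [Real.log_le_log four_pos hc, Real.log_nonneg hx]

section RealWeights

variable {V : Type*} {E : V → V → Prop} [DecidableRel E] {w : V → ℝ} {S : Finset V} {ε : ℝ} {i : V}

lemma div_closedInWeight_le_mul_log_sub_log [DecidableEq V] {c : ℝ} (hc : 0 ≤ c)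
    (hw : ∀ j ∈ S, 0 < w j) (hi : i ∈ S) (hS : (S.erase i).Nonempty)
    (hheavy : ∑ j ∈ S, w j ≤ c * closedInWeight E w S i) :
    w i / closedInWeight E w S i ≤
      c * (Real.log (∑ j ∈ S, w j) - Real.log (∑ j ∈ S.erase i, w j)) := by
  have hsum_pos : 0 < ∑ j ∈ S, w j := sum_pos hw ⟨i, hi⟩
  have herase_pos : 0 < ∑ j ∈ S.erase i, w j := sum_pos (fun j hj ↦ hw j (mem_of_mem_erase hj)) hS
  calc w i / closedInWeight E w S i
    _ ≤ c * (w i / ∑ j ∈ S, w j) := by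
      rw [← mul_div_assoc, div_le_div_iff₀ (closedInWeight_pos hw hi) hsum_pos]
      linarith [mul_le_mul_of_nonneg_left hheavy (hw i hi).le]
    _ = c * ((∑ j ∈ S, w j - ∑ j ∈ S.erase i, w j) / ∑ j ∈ S, w j) := by
      rw [← add_sum_erase S w hi, add_sub_cancel_right]
    _ ≤ _ := mul_le_mul_of_nonneg_left (sub_div_le_log_sub_log herase_pos hsum_pos) hc

lemma sum_div_closedInWeight_le_card (hw : ∀ i ∈ S, 0 ≤ w i) :
    ∑ i ∈ S, w i / closedInWeight E w S i ≤ #S := by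
  rw [← nsmul_one, ← sum_const]
  exact sum_le_sum fun i hi ↦
    div_le_one_of_le₀ (le_closedInWeight hw) ((hw i hi).trans (le_closedInWeight hw))

theorem sum_div_closedInWeight_le_mul_log {a : ℕ} (ha : 0 < a) (haS : a ≤ #S)
    (hindep : ∀ T ⊆ S, DirIsIndepSet E T → #T ≤ a) (hε : 0 < ε) (hw : ∀ i ∈ S, ε ≤ w i) :
    ∑ i ∈ S, w i / closedInWeight E w S i ≤
      a * (1 + 2 * Real.log ((∑ i ∈ S, w i) / (a * ε))) := by
  classical
  induction S using Finset.strongInduction with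
  | H S ih =>
  have hw0 : ∀ i ∈ S, 0 < w i := fun i hi ↦ hε.trans_le (hw i hi)
  have hmass : a * ε ≤ ∑ i ∈ S, w i := calc
    a * ε ≤ #S * ε := by gcongr
    _ ≤ ∑ i ∈ S, w i := by simpa using card_nsmul_le_sum S w ε hw
  have haε : 0 < a * ε := by positivity
  rcases haS.eq_or_lt with heq | hlt
  · have hlog : 0 ≤ Real.log ((∑ i ∈ S, w i) / (a * ε)) :=
      Real.log_nonneg ((one_le_div haε).2 hmass)
    calc ∑ i ∈ S, w i / closedInWeight E w S i
      _ ≤ a := by simpa [heq] using sum_div_closedInWeight_le_card fun i hi ↦ (hw0 i hi).le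
      _ ≤ _ := le_mul_of_one_le_right a.cast_nonneg (by linarith)
  · have hS : S.Nonempty := card_pos.1 (by omega)
    obtain ⟨i, hi, hheavy⟩ := exists_sum_le_mul_closedInWeight hS hindep hw0
    have hS' : S.erase i ⊆ S := erase_subset i S
    have hcard : a ≤ #(S.erase i) := by rw [card_erase_of_mem hi]; omega
    have hne : (S.erase i).Nonempty := card_pos.1 (by omega)
    have hremoved := div_closedInWeight_le_mul_log_sub_log (by positivity) hw0 hi hne hheavy
    have hrest := (sum_div_closedInWeight_le_of_subset (E := E) hS' hw0).trans <|
      ih _ (erase_ssubset hi) hcard (fun T hT ↦ hindep T (hT.trans hS')) fun j hj ↦ hw j (hS' hj)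
    have herase_pos : 0 < ∑ j ∈ S.erase i, w j := sum_pos (fun j hj ↦ hw0 j (hS' hj)) hne
    rw [← add_sum_erase S _ hi, Real.log_div (haε.trans_le hmass).ne' haε.ne']
    rw [Real.log_div herase_pos.ne' haε.ne'] at hrest
    linarith

end RealWeights

theorem stmt1_general {V : Type*} [Fintype V] [Nonempty V] (E : V → V → Prop) [DecidableRel E]
    {w : V → ℝ} {ε : ℝ} (hε : 0 < ε) (hw : ∀ i, ε ≤ w i) :
    ∑ i, w i / (w i + ∑ j with E j i, w j) ≤
      4 * (dirIndepNum V E : ℝ) *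
        Real.log (4 * Fintype.card V * (∑ i, w i) / ((dirIndepNum V E : ℝ) * ε)) := by
  set a := dirIndepNum V E
  have ha : 0 < a := dirIndepNum_pos E
  have hmass : a * ε ≤ ∑ i, w i := calc
    a * ε ≤ Fintype.card V * ε := by gcongr; exact dirIndepNum_le_card E
    _ ≤ ∑ i, w i := by simpa using card_nsmul_le_sum univ w ε fun i _ ↦ hw i
  have hcard : (4 : ℝ) ≤ 4 * Fintype.card V :=
    le_mul_of_one_le_right four_pos.le (mod_cast Fintype.card_pos)
  calc ∑ i, w i / (w i + ∑ j with E j i, w j)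
    _ ≤ a * (1 + 2 * Real.log ((∑ i, w i) / (a * ε))) :=
      sum_div_closedInWeight_le_mul_log ha (dirIndepNum_le_card E)
        (fun _ _ hT ↦ hT.card_le_dirIndepNum) hε fun i _ ↦ hw i
    _ ≤ a * (4 * Real.log (4 * Fintype.card V * ((∑ i, w i) / (a * ε)))) := by
      gcongr
      exact one_add_two_mul_log_le hcard ((one_le_div (by positivity)).2 hmass)
    _ = _ := by rw [mul_div_assoc, mul_left_comm, ← mul_assoc]

theorem stmt1 {V : Type*} [Fintype V] (E : V → V → Prop) [DecidableRel E]
    (K : ℕ) (hK : Fintype.card V = K)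
    (π : V → ℝ) (hnn : ∀ i, 0 ≤ π i) (hsum : ∑ i, π i = 1)
    (ε : ℝ) (hε0 : 0 < ε) (hε1 : ε < 1 / 2) (hπε : ∀ i, ε ≤ π i) :
    ∑ i, π i / (π i + ∑ j ∈ univ.filter (fun j => E j i), π j)
      ≤ 4 * (dirIndepNum V E : ℝ) *
          Real.log (4 * K / ((dirIndepNum V E : ℝ) * ε)) := by
  have : Nonempty V := univ_nonempty_iff.1 (nonempty_of_sum_ne_zero (hsum ▸ one_ne_zero))
  simpa only [hK, hsum, mul_one] using stmt1_general E hε0 hπε
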